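/- arXiv:2202.10120 — 7 statements merged into one kernel-verified Lean document; each statement's English description precedes it below -/
import Mathlib

section
/- Let p be an odd prime, let n ≥ 2, and let K be a field of characteristic p. Let U, V, W be K-vector spaces, let B : U → V → W be K-bilinear, and let g : U → U and h : V → V be K-linear maps satisfying g^p = id and h^p = id. Then for all u ∈ U and v ∈ V: ∑_{0 ≤ i < j ≤ p^n − 1} B (g^i u) (h^j v) = 0. -/
theorem aux_row {W : Type*} [AddCommGroup W] (p : ℕ) (f : ℕ → W)
    (hf : ∀ i m, f (p * m + i) = f i) (m : ℕ) :
    ∑ i ∈ Finset.range (p * m), f i = m • ∑ i ∈ Finset.range p, f i := by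
  induction m with
  | zero => simp
  | succ m ih =>
    rw [Nat.mul_succ, Finset.sum_range_add, ih, succ_nsmul]
    simp only [hf]

theorem aux_tri {W : Type*} [AddCommGroup W] (p : ℕ) (F : ℕ → ℕ → W)
    (h1 : ∀ i j m, F (p * m + i) j = F i j) (h2 : ∀ i j m, F i (p * m + j) = F i j) (m : ℕ) :
    ∑ j ∈ Finset.range (p * m), ∑ i ∈ Finset.range j, F i j =
      m • (∑ j ∈ Finset.range p, ∑ i ∈ Finset.range j, F i j) +
      (m.choose 2) • (∑ j ∈ Finset.range p, ∑ i ∈ Finset.range p, F i j) := by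
  induction m with
  | zero => simp
  | succ m ih =>
    have hc : (m + 1).choose 2 = m + m.choose 2 := by
      simp [Nat.choose_succ_succ' m 1]
    have key : ∀ x, ∑ i ∈ Finset.range (p * m + x), F i (p * m + x) =
        m • (∑ i ∈ Finset.range p, F i x) + ∑ i ∈ Finset.range x, F i x := by
      intro x
      rw [Finset.sum_range_add]
      simp only [h1, h2]
      rw [aux_row p (fun i => F i x) (fun i m => h1 i x m)]
    rw [Nat.mul_succ, Finset.sum_range_add, ih, hc]
    simp only [key, Finset.sum_add_distrib, ← Finset.smul_sum, add_smul, one_smul]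
    abel

/-- Let `p` be an odd prime, `n ≥ 2`, and `K` a field of characteristic `p`.
Let `U, V, W` be `K`-vector spaces, `B : U → V → W` `K`-bilinear, and `g : U → U`,
`h : V → V` `K`-linear with `g^p = id` and `h^p = id`.  Then for all `u ∈ U`, `v ∈ V`,
`∑_{0 ≤ i < j ≤ p^n − 1} B (g^i u) (h^j v) = 0`. -/
theorem stmt3 (p n : ℕ) (hp : p.Prime) (hodd : Odd p) (hn : 2 ≤ n)
    (K : Type*) [Field K] [CharP K p]
    (U V W : Type*) [AddCommGroup U] [Module K U] [AddCommGroup V] [Module K V]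
    [AddCommGroup W] [Module K W]
    (B : U →ₗ[K] V →ₗ[K] W) (g : Module.End K U) (h : Module.End K V)
    (hg : g ^ p = 1) (hh : h ^ p = 1) (u : U) (v : V) :
    ∑ ij ∈ (Finset.range (p ^ n) ×ˢ Finset.range (p ^ n)).filter (fun ij => ij.1 < ij.2),
      B ((g ^ ij.1) u) ((h ^ ij.2) v) = 0 := by
  have h1 : ∀ i m, g ^ (p * m + i) = g ^ i := by
    intro i m; rw [pow_add, pow_mul, hg, one_pow, one_mul]
  have h2 : ∀ i m, h ^ (p * m + i) = h ^ i := by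
    intro i m; rw [pow_add, pow_mul, hh, one_pow, one_mul]
  have hz : ∀ (c : ℕ) (w : W), p ∣ c → c • w = 0 := by
    intro c w hc
    rw [← Nat.cast_smul_eq_nsmul K, (CharP.cast_eq_zero_iff K p c).2 hc, zero_smul]
  obtain ⟨k, rfl⟩ : ∃ k, n = k + 2 := ⟨n - 2, by omega⟩
  have hq : p ∣ p ^ (k + 1) := dvd_pow_self p (by omega)
  have hq2 : p ∣ (p ^ (k + 1)).choose 2 := by
    have hlt : 2 < p := by
      have := hp.two_le
      rcases hodd with ⟨t, ht⟩
      omega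
    have hcop : Nat.Coprime p 2 := hodd.coprime_two_right
    apply hcop.dvd_of_dvd_mul_right
    rw [Nat.choose_two_right, Nat.div_mul_cancel (Nat.even_mul_pred_self _).two_dvd]
    exact Dvd.dvd.mul_right hq _
  have := aux_tri p (fun i j => B ((g ^ i) u) ((h ^ j) v))
    (fun i j m => by simp only [h1]) (fun i j m => by simp only [h2]) (p ^ (k + 1))
  rw [hz _ _ hq, hz _ _ hq2, add_zero, ← pow_succ'] at this
  rw [Finset.sum_filter, Finset.sum_product_right]
  refine Eq.trans (Finset.sum_congr rfl fun j hj => ?_) this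
  rw [← Finset.sum_filter]
  refine Finset.sum_congr ?_ fun _ _ => rfl
  ext i
  simp only [Finset.mem_filter, Finset.mem_range] at hj ⊢
  exact ⟨fun h => h.2, fun h => ⟨h.trans hj, h⟩⟩
end

section
/- Let p be a prime and let K be a field of characteristic p. Set Z := ∏_{i=0}^{p−1} ((i : K)·X + Y) ∈ K[X,Y]. Then the family of polynomials {X^a · Y^b · Z^c : a, c ∈ ℕ, 0 ≤ b ≤ p − 1} is a basis of K[X,Y] as a K-vector space. -/
open MvPolynomial

/-- Let `p` be a prime and `K` a field of characteristic `p`.  Set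
`Z = ∏_{i=0}^{p−1} ((i : K)·X + Y) ∈ K[X,Y]`.  Then the family
`{X^a · Y^b · Z^c : a, c ∈ ℕ, 0 ≤ b ≤ p − 1}` is a `K`-vector space basis of `K[X,Y]`. -/
theorem stmt5 (p : ℕ) (hp : p.Prime) (K : Type*) [Field K] [CharP K p]
    (f : ℕ × Fin p × ℕ → MvPolynomial (Fin 2) K)
    (hf : ∀ a (b : Fin p) c, f (a, b, c) =
      X 0 ^ a * X 1 ^ (b : ℕ) *
        (∏ i ∈ Finset.range p, ((i : K) • X 0 + X 1)) ^ c) :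
    LinearIndependent K f ∧
      Submodule.span K (Set.range f) = (⊤ : Submodule K (MvPolynomial (Fin 2) K)) := by
  classical
  have : NeZero p := ⟨hp.ne_zero⟩
  let A := MvPolynomial (Fin 1) K
  let Z : Polynomial A := ∏ i ∈ Finset.range p,
    (Polynomial.X + Polynomial.C ((i : K) • (X 0 : A)))
  have hZm : Z.Monic := Polynomial.monic_prod_of_monic _ _ fun i _ => Polynomial.monic_X_add_C _
  have hZd : Z.natDegree = p := by
    rw [Polynomial.natDegree_prod_of_monic _ _ fun i _ => Polynomial.monic_X_add_C _]
    simp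
  let g : ℕ → Polynomial A := fun n => Polynomial.X ^ (n % p) * Z ^ (n / p)
  have hgm : ∀ n, (g n).Monic := fun n => (Polynomial.monic_X_pow _).mul (hZm.pow _)
  have hgd : ∀ n, (g n).natDegree = n := fun n => by
    rw [Polynomial.Monic.natDegree_mul (Polynomial.monic_X_pow _) (hZm.pow _),
      hZm.natDegree_pow, hZd, Polynomial.natDegree_X_pow, mul_comm]
    exact Nat.mod_add_div n p
  let S : Polynomial.Sequence A := ⟨g, fun n => by
    rw [Polynomial.degree_eq_natDegree (hgm n).ne_zero, hgd]⟩
  have hS : ∀ i, IsUnit (S i).leadingCoeff := fun i => by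
    have : (S i).leadingCoeff = 1 := hgm i
    rw [this]; exact isUnit_one
  let B := (MvPolynomial.basisMonomials (Fin 1) K).smulTower (S.basis hS)
  let φ : MvPolynomial (Fin 2) K ≃ₐ[K] Polynomial A :=
    (renameEquiv K (Equiv.swap (0 : Fin 2) 1)).trans (finSuccEquiv K 1)
  have h0 : φ (X 0) = Polynomial.C (X 0) := by
    have := finSuccEquiv_X_succ (R := K) (n := 1) (j := 0)
    simpa [φ] using this
  have h1 : φ (X 1) = Polynomial.X := by
    have := finSuccEquiv_X_zero (R := K) (n := 1)
    simpa [φ] using this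
  let e : (Fin 1 →₀ ℕ) × ℕ ≃ ℕ × Fin p × ℕ :=
    Equiv.prodCongr (Finsupp.uniqueEquiv 0) ((Nat.divModEquiv p).trans (Equiv.prodComm _ _))
  let B' := (B.map φ.symm.toLinearEquiv).reindex e
  have key : ∀ t, B' t = f t := by
    rintro ⟨a, b, c⟩
    obtain ⟨⟨m, n⟩, hmn⟩ := e.surjective (a, b, c)
    apply φ.injective
    have hm : m 0 = a := congrArg Prod.fst hmn
    have hb : n % p = (b : ℕ) := by
      have := congrArg (fun x => ((x.2.1 : Fin p) : ℕ)) hmn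
      simpa [e, Nat.divModEquiv] using this
    have hc : n / p = c := congrArg (fun x => x.2.2) hmn
    have hl : φ (B' (a, b, c)) = B (m, n) := by
      rw [← hmn]
      simp [B']
    have hmm : monomial m (1 : K) = X 0 ^ a := by
      have hs : m = Finsupp.single 0 a := by
        ext
        simpa using hm
      rw [X_pow_eq_monomial, hs]
    have hZ : φ (∏ i ∈ Finset.range p, ((i : K) • X 0 + X 1)) = Z := by
      rw [map_prod]
      refine Finset.prod_congr rfl fun i _ => ?_
      rw [map_add, map_smul, h0, h1, Polynomial.smul_C, add_comm]
    rw [hl, hf, map_mul, map_mul, map_pow, map_pow, map_pow, h0, h1, hZ]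
    have : B (m, n) = monomial m (1 : K) • g n := by
      simp only [B, Module.Basis.smulTower_apply, Polynomial.Sequence.basis_eq_self,
        coe_basisMonomials]
      rfl
    rw [this, hmm, Polynomial.smul_eq_C_mul, Polynomial.C_pow, mul_assoc]
    simp only [g, hb, hc]
  have hfB : f = B' := funext fun t => (key t).symm
  rw [hfB]
  exact ⟨B'.linearIndependent, B'.span_eq⟩
end

section
/- Let p be an odd prime and let K be a field of characteristic p. Let φ be the K-algebra endomorphism of K[X,Y] determined by φ(X) = X and φ(Y) = X + Y. If f ∈ K[X,Y] satisfies φ(f) = f and the degree of f in the variable Y is at most p − 1, then f lies in the image of K[X] in K[X,Y], i.e. f is a polynomial in X alone. -/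
open MvPolynomial

/-- Let `p` be an odd prime and `K` a field of characteristic `p`.  Let `φ` be the
`K`-algebra endomorphism of `K[X,Y]` with `φ(X) = X` and `φ(Y) = X + Y`.  If `f ∈ K[X,Y]`
satisfies `φ(f) = f` and `deg_Y f ≤ p − 1`, then `f` is a polynomial in `X` alone. -/
theorem stmt6 (p : ℕ) (hp : p.Prime) (hodd : Odd p) (K : Type*) [Field K] [CharP K p]
    (φ : MvPolynomial (Fin 2) K →ₐ[K] MvPolynomial (Fin 2) K)
    (hX : φ (X 0) = X 0) (hY : φ (X 1) = X 0 + X 1)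
    (f : MvPolynomial (Fin 2) K) (hfix : φ f = f) (hdeg : degreeOf 1 f ≤ p - 1) :
    ∃ g : Polynomial K, f = Polynomial.aeval (X 0 : MvPolynomial (Fin 2) K) g := by
  classical
  let e : Polynomial K → (MvPolynomial (Fin 2) K →ₐ[K] Polynomial K) :=
    fun a => aeval ![Polynomial.X, a]
  let ψ : MvPolynomial (Fin 2) K →ₐ[K] Polynomial (Polynomial K) :=
    aeval ![Polynomial.C Polynomial.X, Polynomial.X]
  let θ : Polynomial (Polynomial K) →+* MvPolynomial (Fin 2) K :=
    Polynomial.eval₂RingHom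
      (Polynomial.aeval (X 0 : MvPolynomial (Fin 2) K)).toRingHom (X 1)
  have hθ : ∀ q, θ (ψ q) = q := by
    intro q
    induction q using MvPolynomial.induction_on with
    | C a =>
      have : ψ (C a) = Polynomial.C (Polynomial.C a) := by
        simp [ψ, MvPolynomial.algHom_C]
      rw [this]
      simp [θ, MvPolynomial.algebraMap_eq]
    | add a b ha hb => rw [map_add, map_add, ha, hb]
    | mul_X a i ha =>
      rw [map_mul, map_mul, ha]
      fin_cases i <;> simp [ψ, θ]
  have heval : ∀ a q, Polynomial.eval a (ψ q) = e a q := by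
    intro a q
    induction q using MvPolynomial.induction_on with
    | C c =>
      have : ψ (C c) = Polynomial.C (Polynomial.C c) := by
        simp [ψ, MvPolynomial.algHom_C]
      rw [this]
      simp [e]
    | add a b ha hb => rw [map_add, map_add, Polynomial.eval_add, ha, hb]
    | mul_X a i ha =>
      rw [map_mul, map_mul, Polynomial.eval_mul, ha]
      fin_cases i <;> simp [ψ, e]
  have hstep : ∀ a, e (Polynomial.X + a) f = e a f := by
    intro a
    have h : (e a).comp φ = e (Polynomial.X + a) := by
      apply MvPolynomial.algHom_ext
      intro i
      fin_cases i <;> simp [hX, hY, e]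
    rw [← h, AlgHom.comp_apply, hfix]
  have hn : ∀ n : ℕ, e ((n : Polynomial K) * Polynomial.X) f = e 0 f := by
    intro n
    induction n with
    | zero => simp
    | succ n ih =>
      rw [← ih, ← hstep ((n : Polynomial K) * Polynomial.X)]
      congr 2
      push_cast
      ring
  have hdegF : (ψ f).natDegree ≤ p - 1 := by
    rw [show ψ f = _ from MvPolynomial.aeval_def _ _, MvPolynomial.eval₂_eq']
    apply Polynomial.natDegree_sum_le_of_forall_le
    intro d hd
    have h1 : d 1 ≤ p - 1 := (MvPolynomial.degreeOf_le_iff.mp hdeg) d hd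
    have : (algebraMap K (Polynomial (Polynomial K))) (coeff d f) *
        ∏ i, (![Polynomial.C Polynomial.X, Polynomial.X] : Fin 2 → Polynomial (Polynomial K)) i ^ d i
        = Polynomial.C (Polynomial.C (coeff d f) * Polynomial.X ^ d 0) * Polynomial.X ^ d 1 := by
      rw [Fin.prod_univ_two, show algebraMap K (Polynomial (Polynomial K)) (coeff d f) =
        Polynomial.C (Polynomial.C (coeff d f)) from rfl]
      simp [mul_assoc]
    rw [this]
    exact (Polynomial.natDegree_C_mul_X_pow_le _ _).trans h1
  have hF : ψ f - Polynomial.C (e 0 f) = 0 := by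
    apply Polynomial.eq_zero_of_natDegree_lt_card_of_eval_eq_zero
      (f := fun n : Fin p => ((n : ℕ) : Polynomial K) * Polynomial.X)
    · intro a b hab
      have h2 := mul_right_cancel₀ Polynomial.X_ne_zero hab
      have h3 := (CharP.natCast_eq_natCast (Polynomial K) p).mp h2
      exact Fin.ext (Nat.ModEq.eq_of_lt_of_lt h3 a.2 b.2)
    · intro n
      rw [Polynomial.eval_sub, heval, hn, Polynomial.eval_C, sub_self]
    · rw [Polynomial.natDegree_sub_C, Fintype.card_fin]
      have := hp.pos
      omega
  refine ⟨e 0 f, ?_⟩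
  have h := hθ f
  rw [sub_eq_zero.mp hF] at h
  refine h.symm.trans ?_
  simp [θ]
end

section
/- Let p be an odd prime and let K be a field of characteristic p. Let φ be the K-algebra endomorphism of K[X,Y] determined by φ(X) = X and φ(Y) = X + Y, and let W ⊆ K[X,Y] be the K-linear span of the monomials {X^a Y^b : a ≥ 0, 0 ≤ b ≤ p − 1}. Then the image (φ − id)(W) equals the K-linear span of the monomials {X^a Y^b : a ≥ 1, 0 ≤ b ≤ p − 2}. -/
open MvPolynomial

/-- Let `p` be an odd prime and `K` a field of characteristic `p`.  Let `φ` be the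
`K`-algebra endomorphism of `K[X,Y]` with `φ(X) = X`, `φ(Y) = X + Y`, and let `W` be the
`K`-span of `{X^a Y^b : a ≥ 0, 0 ≤ b ≤ p − 1}`.  Then `(φ − id)(W)` is the `K`-span of
`{X^a Y^b : a ≥ 1, 0 ≤ b ≤ p − 2}`. -/
theorem stmt7 (p : ℕ) (hp : p.Prime) (hodd : Odd p) (K : Type*) [Field K] [CharP K p]
    (φ : MvPolynomial (Fin 2) K →ₐ[K] MvPolynomial (Fin 2) K)
    (hX : φ (X 0) = X 0) (hY : φ (X 1) = X 0 + X 1) :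
    Submodule.map (φ.toLinearMap - LinearMap.id)
        (Submodule.span K {m : MvPolynomial (Fin 2) K |
          ∃ a b : ℕ, b ≤ p - 1 ∧ m = X 0 ^ a * X 1 ^ b}) =
      Submodule.span K {m : MvPolynomial (Fin 2) K |
        ∃ a b : ℕ, 1 ≤ a ∧ b ≤ p - 2 ∧ m = X 0 ^ a * X 1 ^ b} := by
  have hp2 := hp.two_le
  have key : ∀ a b : ℕ, (φ.toLinearMap - LinearMap.id : MvPolynomial (Fin 2) K →ₗ[K] MvPolynomial (Fin 2) K)
        (X 0 ^ a * X 1 ^ b : MvPolynomial (Fin 2) K) =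
      ∑ j ∈ Finset.range b, ((b.choose j : ℕ) : K) •
        (X 0 ^ (a + (b - j)) * X 1 ^ j : MvPolynomial (Fin 2) K) := by
    intro a b
    have h1 : (φ.toLinearMap - LinearMap.id : MvPolynomial (Fin 2) K →ₗ[K] MvPolynomial (Fin 2) K)
        (X 0 ^ a * X 1 ^ b : MvPolynomial (Fin 2) K) =
        X 0 ^ a * (X 1 + X 0) ^ b - X 0 ^ a * X 1 ^ b := by
      simp [hX, hY, add_comm]
    rw [h1, add_pow, Finset.sum_range_succ, mul_add, Finset.mul_sum]
    simp only [Nat.sub_self, pow_zero, Nat.choose_self, Nat.cast_one, mul_one, add_sub_cancel_right]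
    refine Finset.sum_congr rfl fun j _ => ?_
    rw [MvPolynomial.smul_eq_C_mul, map_natCast, pow_add]
    ring
  apply le_antisymm
  · rw [Submodule.map_span_le]
    rintro m ⟨a, b, hb, rfl⟩
    rw [key]
    refine Submodule.sum_mem _ fun j hj => Submodule.smul_mem _ _ (Submodule.subset_span ?_)
    have := Finset.mem_range.1 hj
    exact ⟨a + (b - j), j, by omega, by omega, rfl⟩
  · rw [Submodule.span_le]
    rintro m ⟨a, b, ha, hb, rfl⟩
    induction b using Nat.strong_induction_on generalizing a with
    | _ b ih =>
      have h := key (a - 1) (b + 1)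
      rw [Finset.sum_range_succ] at h
      have hne : (((b + 1).choose b : ℕ) : K) ≠ 0 := by
        rw [Nat.choose_succ_self_right, Ne, CharP.cast_eq_zero_iff K p]
        intro hd
        have := Nat.le_of_dvd (by omega) hd
        omega
      have hab : a - 1 + (b + 1 - b) = a := by omega
      rw [hab] at h
      rw [SetLike.mem_coe, ← Submodule.smul_mem_iff _ hne, eq_sub_iff_add_eq'.2 h.symm]
      refine Submodule.sub_mem _ (Submodule.mem_map_of_mem (Submodule.subset_span
        ⟨a - 1, b + 1, by omega, rfl⟩)) ?_
      refine Submodule.sum_mem _ fun j hj => Submodule.smul_mem _ _ ?_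
      have := Finset.mem_range.1 hj
      exact ih j this _ (by omega) (by omega)
end

section
/- Let p be an odd prime and let K be a field of characteristic p. Let A = Λ_K(x₁, y₁) ⊗_K K[x₂, y₂] be the tensor product of the exterior algebra on a 2-dimensional K-vector space with basis x₁, y₁ and the polynomial ring in two variables x₂, y₂, and let σ be the K-algebra automorphism of A determined by σ(x₁) = x₁, σ(y₁) = x₁ + y₁, σ(x₂) = x₂, σ(y₂) = x₂ + y₂. Then the subalgebra of σ-invariant elements {f ∈ A : σ(f) = f} is exactly the K-subalgebra generated by the five elements x₁, x₂, x₁y₁, x₁y₂ − y₁x₂, and ∏_{i=0}^{p−1} ((i : K)·x₂ + y₂). -/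
noncomputable section

open TensorProduct

/-- `A = Λ_K(x₁,y₁) ⊗_K K[x₂,y₂]`: the tensor product of the exterior algebra on a
2-dimensional `K`-vector space with the polynomial ring in two variables. -/
abbrev ExtPolyAlg (K : Type) [Field K] : Type :=
  ExteriorAlgebra K (Fin 2 → K) ⊗[K] MvPolynomial (Fin 2) K

variable (K : Type) [Field K]

/-- The element `x₁` of `A`. -/
def ex1 : ExtPolyAlg K := ExteriorAlgebra.ι K (Pi.single 0 1) ⊗ₜ 1

/-- The element `y₁` of `A`. -/
def ey1 : ExtPolyAlg K := ExteriorAlgebra.ι K (Pi.single 1 1) ⊗ₜ 1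

/-- The element `x₂` of `A`. -/
def ex2 : ExtPolyAlg K := 1 ⊗ₜ MvPolynomial.X 0

/-- The element `y₂` of `A`. -/
def ey2 : ExtPolyAlg K := 1 ⊗ₜ MvPolynomial.X 1

section PolySec

open Polynomial

def NN (p : ℕ) : K[X][X] := ∏ i ∈ Finset.range p, (X + C ((i : K[X]) * X))

lemma NN_monic (p : ℕ) : (NN K p).Monic := monic_prod_of_monic _ _ fun i _ => monic_X_add_C _
lemma NN_deg (p : ℕ) : (NN K p).natDegree = p := by
  rw [NN, natDegree_prod_of_monic _ _ fun i _ => monic_X_add_C _]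
  simp only [natDegree_X_add_C]; simp

lemma NN_inv (p : ℕ) (hchar : CharP K p) : (NN K p).comp (X + C X) = NN K p := by
  have h : (NN K p).comp (X + C X) = ∏ i ∈ Finset.range p, (X + C (((i+1 : ℕ) : K[X]) * X)) := by
    rw [NN, prod_comp]
    refine Finset.prod_congr rfl fun i _ => ?_
    simp [add_mul]; ring
  have h0 : ((p : ℕ) : K[X]) = 0 := CharP.cast_eq_zero _ _
  have h1 := Finset.prod_range_succ (fun i : ℕ => (X + C ((i : K[X]) * X) : K[X][X])) p
  rw [Finset.prod_range_succ', ← h] at h1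
  simp only [h0, Nat.cast_zero, zero_mul, map_zero, add_zero] at h1
  exact mul_right_cancel₀ X_ne_zero h1

lemma low (p : ℕ) (hp : p.Prime) (hchar : CharP K p) (r : K[X][X]) (hr : r.comp (X + C X) = r)
    (hd : r.natDegree < p) : r = C (r.eval 0) := by
  have hev : ∀ i : ℕ, r.eval ((i : K[X]) * X) = r.eval 0 := by
    intro i
    induction i with
    | zero => simp
    | succ i ih =>
      rw [← ih]
      conv_rhs => rw [← hr]
      simp [eval_comp, add_mul]
  rw [← sub_eq_zero]
  refine eq_zero_of_natDegree_lt_card_of_eval_eq_zero (ι := Fin p) _ (f := fun i => ((i : ℕ) : K[X]) * X) ?_ ?_ ?_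
  · intro i j hij
    have h1 := mul_right_cancel₀ X_ne_zero hij
    have := (CharP.natCast_eq_natCast K[X] p).1 h1
    exact Fin.ext (Nat.ModEq.eq_of_lt_of_lt this i.2 j.2)
  · intro i; simp [hev]
  · simpa using hd

lemma polyInv_mem (p : ℕ) (hp : p.Prime) (hchar : CharP K p) : ∀ (n : ℕ) (f : K[X][X]),
    f.natDegree ≤ n → f.comp (X + C X) = f → f ∈ Algebra.adjoin K {C X, NN K p} := by
  have hC : ∀ c : K[X], (C c : K[X][X]) ∈ Algebra.adjoin K {C X, NN K p} := by
    intro c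
    induction c using Polynomial.induction_on' with
    | add a b ha hb => rw [map_add]; exact add_mem ha hb
    | monomial n a =>
      rw [← C_mul_X_pow_eq_monomial, map_mul, map_pow]
      refine mul_mem ?_ (pow_mem (Algebra.subset_adjoin (by simp)) _)
      exact Subalgebra.algebraMap_mem _ a
  intro n
  induction n with
  | zero => intro f hf _; rw [eq_C_of_natDegree_le_zero hf]; exact hC _
  | succ n ih =>
    intro f hf hinv
    have hm := NN_monic K p
    have hN1 : NN K p ≠ 1 := by
      intro h; have := NN_deg K p; rw [h, natDegree_one] at this; exact hp.ne_zero this.symm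
    have hrd := natDegree_modByMonic_lt f hm hN1
    have hu := div_modByMonic_unique (f := f) ((f /ₘ NN K p).comp (X + C X))
      ((f %ₘ NN K p).comp (X + C X)) hm ⟨by
        have := congrArg (fun g => g.comp (X + C X)) (modByMonic_add_div f (NN K p))
        simp only [add_comp, mul_comp, NN_inv K p hchar] at this
        rw [this, hinv], by
        apply degree_lt_degree
        rw [natDegree_comp, natDegree_X_add_C, mul_one]; exact hrd⟩
    rw [← modByMonic_add_div f (NN K p)]
    refine add_mem ?_ (mul_mem (Algebra.subset_adjoin (by simp)) (ih _ ?_ hu.1.symm))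
    · rw [low K p hp hchar _ hu.2.symm (by rwa [NN_deg] at hrd)]; exact hC _
    · rw [natDegree_divByMonic _ hm, NN_deg]; have := hp.pos; omega

def sg : MvPolynomial (Fin 2) K →ₐ[K] MvPolynomial (Fin 2) K :=
  MvPolynomial.aeval ![MvPolynomial.X 0, MvPolynomial.X 0 + MvPolynomial.X 1]

def toP : MvPolynomial (Fin 2) K →ₐ[K] K[X][X] := MvPolynomial.aeval ![C X, X]
def ofP : K[X][X] →ₐ[K] MvPolynomial (Fin 2) K :=
  Polynomial.eval₂AlgHom (Polynomial.aeval (MvPolynomial.X 0)) (MvPolynomial.X 1) (fun _ => Commute.all _ _)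

def nn (p : ℕ) : MvPolynomial (Fin 2) K :=
  ((List.range p).map (fun i : ℕ => (i : K) • (MvPolynomial.X 0 : MvPolynomial (Fin 2) K) + MvPolynomial.X 1)).prod

lemma ofP_toP (f : MvPolynomial (Fin 2) K) : ofP K (toP K f) = f := by
  have : (ofP K).comp (toP K) = AlgHom.id K _ := by
    apply MvPolynomial.algHom_ext
    intro i; fin_cases i <;> simp [ofP, toP]
  exact DFunLike.congr_fun this f

lemma ofP_NN (p : ℕ) : ofP K (NN K p) = nn K p := by
  have h : ∀ n : ℕ, ofP K (NN K n) = nn K n := by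
    intro n
    induction n with
    | zero => simp [NN, nn]
    | succ n ih =>
      rw [NN, Finset.prod_range_succ, map_mul, ← NN, ih, nn, nn, List.range_succ, List.map_append,
        List.prod_append]
      simp [ofP, Algebra.smul_def, add_comm]
  exact h p

lemma toP_sg (f : MvPolynomial (Fin 2) K) : toP K (sg K f) = (toP K f).comp (X + C X) := by
  have : (toP K).comp (sg K) = ((Polynomial.aeval (R := K[X]) (X + C X : K[X][X])).restrictScalars K).comp (toP K) := by
    apply MvPolynomial.algHom_ext
    intro i; fin_cases i <;> simp [sg, toP, add_comm]
  exact DFunLike.congr_fun this f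

lemma sg_mem (p : ℕ) (hp : p.Prime) (hchar : CharP K p) (f : MvPolynomial (Fin 2) K) (hf : sg K f = f) :
    f ∈ Algebra.adjoin K {MvPolynomial.X 0, nn K p} := by
  have h := polyInv_mem K p hp hchar _ (toP K f) le_rfl (by rw [← toP_sg, hf])
  have h2 : ofP K (toP K f) ∈ (Algebra.adjoin K {C X, NN K p}).map (ofP K) := ⟨_, h, rfl⟩
  rw [ofP_toP, AlgHom.map_adjoin, Set.image_pair, ofP_NN] at h2
  simpa [ofP] using h2

lemma X0_dvd (b : MvPolynomial (Fin 2) K) : (MvPolynomial.X 0) ∣ sg K b - b := by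
  rw [← Ideal.mem_span_singleton, ← Ideal.Quotient.eq]
  have : (Ideal.Quotient.mkₐ K (Ideal.span {(MvPolynomial.X 0 : MvPolynomial (Fin 2) K)})).comp (sg K)
      = Ideal.Quotient.mkₐ K (Ideal.span {(MvPolynomial.X 0 : MvPolynomial (Fin 2) K)}) := by
    apply MvPolynomial.algHom_ext
    intro i; fin_cases i
    · simp [sg]
    · simp [sg, Ideal.Quotient.eq_zero_iff_mem, Ideal.mem_span_singleton]
  exact DFunLike.congr_fun this b

lemma sg_nn (p : ℕ) (hchar : CharP K p) : sg K (nn K p) = nn K p := by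
  have h : sg K (nn K p) = ofP K (toP K (sg K (nn K p))) := (ofP_toP K _).symm
  have h2 : toP K (nn K p) = NN K p := by
    have h : ∀ n : ℕ, toP K (nn K n) = NN K n := by
      intro n
      induction n with
      | zero => simp [NN, nn]
      | succ n ih =>
        rw [NN, Finset.prod_range_succ, ← NN, ← ih, nn, nn, List.range_succ, List.map_append,
          List.prod_append, map_mul]
        simp [toP, Algebra.smul_def, add_comm]
    exact h p
  rw [h, toP_sg, h2, NN_inv K p hchar, ofP_NN]

end PolySec

section MatSec

abbrev SS := MvPolynomial (Fin 2) K

def Mx : Matrix (Fin 4) (Fin 4) (SS K) := !![0,0,0,0; 1,0,0,0; 0,0,0,0; 0,0,1,0]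
def My : Matrix (Fin 4) (Fin 4) (SS K) := !![0,0,0,0; 0,0,0,0; 1,0,0,0; 0,-1,0,0]

lemma Mxx : Mx K * Mx K = 0 := by
  ext i j; fin_cases i <;> fin_cases j <;> simp [Mx, Matrix.mul_apply, Fin.sum_univ_four]
lemma Myy : My K * My K = 0 := by
  ext i j; fin_cases i <;> fin_cases j <;> simp [My, Matrix.mul_apply, Fin.sum_univ_four]
lemma Mxy : Mx K * My K + My K * Mx K = 0 := by
  ext i j; fin_cases i <;> fin_cases j <;> simp [Mx, My, Matrix.mul_apply, Fin.sum_univ_four]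

def Ml : (Fin 2 → K) →ₗ[K] Matrix (Fin 4) (Fin 4) (SS K) :=
  (LinearMap.proj 0 : (Fin 2 → K) →ₗ[K] K).smulRight (Mx K) +
  (LinearMap.proj 1 : (Fin 2 → K) →ₗ[K] K).smulRight (My K)

lemma Ml_sq (v : Fin 2 → K) : Ml K v * Ml K v = 0 := by
  have h : Ml K v * Ml K v = (v 0 * v 0) • (Mx K * Mx K) + (v 1 * v 1) • (My K * My K)
      + (v 0 * v 1) • (Mx K * My K + My K * Mx K) := by
    simp only [Ml, LinearMap.add_apply, LinearMap.smulRight_apply, LinearMap.proj_apply, mul_add,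
      add_mul, smul_mul_assoc, mul_smul_comm, smul_smul, smul_add]
    rw [mul_comm (v 1) (v 0)]
    abel
  rw [h, Mxx, Myy, Mxy]; simp

def Mhom : ExtPolyAlg K →ₐ[K] Matrix (Fin 4) (Fin 4) (SS K) :=
  Algebra.TensorProduct.lift (ExteriorAlgebra.lift K ⟨Ml K, Ml_sq K⟩)
    (IsScalarTower.toAlgHom K (SS K) _) (fun _ y => (Algebra.commutes y _).symm)

def jj : SS K →ₐ[K] ExtPolyAlg K := Algebra.TensorProduct.includeRight

lemma jj_comm (s : SS K) (a : ExtPolyAlg K) : jj K s * a = a * jj K s := by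
  induction a using TensorProduct.induction_on with
  | zero => simp
  | tmul x y => simp [jj, mul_comm]
  | add x y hx hy => rw [mul_add, add_mul, hx, hy]

def form (a b c d : SS K) : ExtPolyAlg K :=
  jj K a + jj K b * ex1 K + jj K c * ey1 K + jj K d * (ex1 K * ey1 K)

lemma M_jj (s : SS K) : Mhom K (jj K s) = algebraMap (SS K) _ s := by
  refine (Algebra.TensorProduct.lift_tmul _ _ _ _ _).trans ?_
  rw [map_one, one_mul]
  rfl
lemma M_x : Mhom K (ex1 K) = Mx K := by
  simp [Mhom, ex1, Ml]
lemma M_y : Mhom K (ey1 K) = My K := by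
  simp [Mhom, ey1, Ml]

lemma form_inj {a b c d a' b' c' d' : SS K} (h : form K a b c d = form K a' b' c' d') :
    a = a' ∧ b = b' ∧ c = c' ∧ d = d' := by
  have h1 := congrArg (Mhom K) h
  simp only [form, map_add, map_mul, M_jj, M_x, M_y] at h1
  refine ⟨?_, ?_, ?_, ?_⟩
  · have := congrFun (congrFun h1 0) 0
    simpa [Mx, My, Matrix.algebraMap_matrix_apply, Matrix.mul_apply, Fin.sum_univ_four] using this
  · have := congrFun (congrFun h1 1) 0
    simpa [Mx, My, Matrix.algebraMap_matrix_apply, Matrix.mul_apply, Fin.sum_univ_four] using this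
  · have := congrFun (congrFun h1 2) 0
    simpa [Mx, My, Matrix.algebraMap_matrix_apply, Matrix.mul_apply, Fin.sum_univ_four] using this
  · have := congrFun (congrFun h1 3) 0
    simpa [Mx, My, Matrix.algebraMap_matrix_apply, Matrix.mul_apply, Fin.sum_univ_four] using this

lemma xx : ex1 K * ex1 K = 0 := by simp [ex1]
lemma yy : ey1 K * ey1 K = 0 := by simp [ey1]
lemma yx : ey1 K * ex1 K = - (ex1 K * ey1 K) := by
  rw [eq_neg_iff_add_eq_zero, ex1, ey1, Algebra.TensorProduct.tmul_mul_tmul,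
    Algebra.TensorProduct.tmul_mul_tmul, ← TensorProduct.add_tmul, ExteriorAlgebra.ι_add_mul_swap,
    TensorProduct.zero_tmul]

lemma form_add (a b c d a' b' c' d' : SS K) :
    form K a b c d + form K a' b' c' d' = form K (a + a') (b + b') (c + c') (d + d') := by
  simp only [form, map_add, add_mul]; abel

lemma form_jj (s a b c d : SS K) :
    jj K s * form K a b c d = form K (s * a) (s * b) (s * c) (s * d) := by
  simp only [form, map_mul, mul_add, mul_assoc]

lemma form_x (a b c d : SS K) : ex1 K * form K a b c d = form K 0 a 0 c := by
  simp only [form, mul_add, ← mul_assoc, ← jj_comm]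
  simp only [mul_assoc, xx, map_zero, zero_mul, mul_zero]
  simp

lemma form_y (a b c d : SS K) : ey1 K * form K a b c d = form K 0 0 a (-b) := by
  simp only [form, mul_add, ← mul_assoc, ← jj_comm]
  simp only [mul_assoc, yy, map_zero, zero_mul, mul_zero, yx]
  have h : -(ex1 K * ey1 K) * ey1 K = 0 := by
    refine (neg_mul (ex1 K * ey1 K) (ey1 K)).trans ?_
    rw [mul_assoc, yy, mul_zero]
    exact neg_zero
  have h2 : jj K b * -(ex1 K * ey1 K) = jj K (-b) * (ex1 K * ey1 K) := by
    rw [map_neg]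
    exact (mul_neg (jj K b) (ex1 K * ey1 K)).trans (neg_mul (jj K b) (ex1 K * ey1 K)).symm
  rw [h, h2]; simp only [mul_zero, add_zero, zero_add]

lemma form_left (z : ExteriorAlgebra K (Fin 2 → K)) : ∀ a b c d : SS K,
    ∃ a' b' c' d', (z ⊗ₜ[K] (1 : SS K)) * form K a b c d = form K a' b' c' d' := by
  induction z using ExteriorAlgebra.induction with
  | algebraMap r =>
    intro a b c d
    have : (algebraMap K (ExteriorAlgebra K (Fin 2 → K)) r) ⊗ₜ[K] (1 : SS K) = jj K (algebraMap K _ r) := by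
      rw [AlgHom.commutes]; rfl
    rw [this, form_jj]; exact ⟨_, _, _, _, rfl⟩
  | ι v =>
    intro a b c d
    have : (ExteriorAlgebra.ι K v) ⊗ₜ[K] (1 : SS K) =
        jj K (algebraMap K _ (v 0)) * ex1 K + jj K (algebraMap K _ (v 1)) * ey1 K := by
      have hv : v = v 0 • Pi.single 0 1 + v 1 • Pi.single 1 1 := by
        ext i; fin_cases i <;> simp
      conv_lhs => rw [hv]
      rw [AlgHom.commutes, AlgHom.commutes, map_add, map_smul, map_smul, TensorProduct.add_tmul,
        ← Algebra.smul_def, ← Algebra.smul_def]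
      rfl
    rw [this, add_mul, mul_assoc, mul_assoc, form_x, form_y, form_jj, form_jj, form_add]
    exact ⟨_, _, _, _, rfl⟩
  | mul x y hx hy =>
    intro a b c d
    obtain ⟨a1, b1, c1, d1, h1⟩ := hy a b c d
    obtain ⟨a2, b2, c2, d2, h2⟩ := hx a1 b1 c1 d1
    refine ⟨a2, b2, c2, d2, ?_⟩
    rw [← h2, ← h1, ← mul_assoc, Algebra.TensorProduct.tmul_mul_tmul, one_mul]
  | add x y hx hy =>
    intro a b c d
    obtain ⟨a1, b1, c1, d1, h1⟩ := hy a b c d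
    obtain ⟨a2, b2, c2, d2, h2⟩ := hx a b c d
    rw [TensorProduct.add_tmul, add_mul, h1, h2, form_add]
    exact ⟨_, _, _, _, rfl⟩

lemma form_surj (f : ExtPolyAlg K) : ∃ a b c d, f = form K a b c d := by
  induction f using TensorProduct.induction_on with
  | zero => exact ⟨0, 0, 0, 0, by simp [form]⟩
  | tmul x s =>
    obtain ⟨a, b, c, d, h⟩ := form_left K x s 0 0 0
    refine ⟨a, b, c, d, ?_⟩
    rw [← h]; simp [form, jj]
  | add x y hx hy =>
    obtain ⟨a, b, c, d, rfl⟩ := hx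
    obtain ⟨a', b', c', d', rfl⟩ := hy
    exact ⟨_, _, _, _, form_add K _ _ _ _ _ _ _ _⟩

lemma jj_nn (p : ℕ) :
    jj K (nn K p) = ((List.range p).map (fun i => (i : K) • ex2 K + ey2 K)).prod := by
  have h : (do let a ← List.range p; pure (a : K) : List K) = (List.range p).map (fun a : ℕ => (a : K)) := by
    exact List.flatMap_pure_eq_map _ _
  rw [h, nn, map_list_prod, List.map_map, List.map_map]
  congr 1
  apply List.map_congr_left
  intro i _
  simp only [Function.comp, map_add, map_smul]
  rfl

end MatSec

/-- for an odd prime `p` and `K` of characteristic `p`, if `σ` is the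
`K`-algebra endomorphism of `A` with `σ(x₁) = x₁`, `σ(y₁) = x₁ + y₁`, `σ(x₂) = x₂`,
`σ(y₂) = x₂ + y₂`, then the invariants `{f : σ f = f}` form exactly the `K`-subalgebra
generated by `x₁`, `x₂`, `x₁y₁`, `x₁y₂ − y₁x₂` and `∏_{i=0}^{p−1} ((i : K)·x₂ + y₂)`. -/
theorem stmt9 (p : ℕ) (hp : p.Prime) (hodd : Odd p) (hchar : CharP K p)
    (σ : ExtPolyAlg K →ₐ[K] ExtPolyAlg K)
    (hx1 : σ (ex1 K) = ex1 K) (hy1 : σ (ey1 K) = ex1 K + ey1 K)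
    (hx2 : σ (ex2 K) = ex2 K) (hy2 : σ (ey2 K) = ex2 K + ey2 K) :
    {f : ExtPolyAlg K | σ f = f} =
      ↑(Algebra.adjoin K {ex1 K, ex2 K, ex1 K * ey1 K, ex1 K * ey2 K - ey1 K * ex2 K,
          ((List.range p).map (fun i => (i : K) • ex2 K + ey2 K)).prod}) := by
  have e2 : ex2 K = jj K (MvPolynomial.X 0) := rfl
  have f2 : ey2 K = jj K (MvPolynomial.X 1) := rfl
  have hj : ∀ s, σ (jj K s) = jj K (sg K s) := by
    intro s
    have : σ.comp (jj K) = (jj K).comp (sg K) := by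
      apply MvPolynomial.algHom_ext
      intro i; fin_cases i
      · simpa [sg, e2] using hx2
      · simpa [sg, e2, f2] using hy2
    exact DFunLike.congr_fun this s
  have hform : ∀ a b c d, σ (form K a b c d) = form K (sg K a) (sg K b + sg K c) (sg K c) (sg K d) := by
    intro a b c d
    simp only [form, map_add, map_mul, hj, hx1, hy1, mul_add, add_mul, xx]
    simp only [zero_add, mul_zero]
    abel
  set G : Set (ExtPolyAlg K) := {ex1 K, ex2 K, ex1 K * ey1 K, ex1 K * ey2 K - ey1 K * ex2 K,
          ((List.range p).map (fun i => (i : K) • ex2 K + ey2 K)).prod} with hG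
  apply Set.Subset.antisymm
  · intro f hf
    obtain ⟨a, b, c, d, rfl⟩ := form_surj K f
    have hf' : σ (form K a b c d) = form K a b c d := hf
    rw [hform] at hf'
    obtain ⟨ha, hb, hc, hd⟩ := form_inj K hf'
    have hS : ∀ s, sg K s = s → jj K s ∈ Algebra.adjoin K G := by
      intro s hs
      have h1 : jj K s ∈ (Algebra.adjoin K {MvPolynomial.X 0, nn K p}).map (jj K) :=
        ⟨_, sg_mem K p hp hchar s hs, rfl⟩
      rw [AlgHom.map_adjoin, Set.image_pair, jj_nn] at h1
      refine Algebra.adjoin_mono ?_ h1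
      rintro z (rfl | rfl)
      · rw [← e2, hG]; simp
      · rw [hG]; simp
    have hdvd : (MvPolynomial.X 0) ∣ c := by
      obtain ⟨t, ht⟩ := X0_dvd K b
      refine ⟨-t, ?_⟩
      rw [hc] at hb
      linear_combination hb - ht
    obtain ⟨c', rfl⟩ := hdvd
    have s0 : sg K (MvPolynomial.X 0) = MvPolynomial.X 0 := by simp [sg]
    have s1 : sg K (MvPolynomial.X 1) = MvPolynomial.X 0 + MvPolynomial.X 1 := by simp [sg]
    have hc' : sg K c' = c' := by
      rw [map_mul, s0] at hc
      exact mul_left_cancel₀ (MvPolynomial.X_ne_zero 0) hc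
    have hbb : sg K (b + MvPolynomial.X 1 * c') = b + MvPolynomial.X 1 * c' := by
      rw [map_add, map_mul, s1, hc']
      rw [hc] at hb
      linear_combination hb
    have key : form K a b (MvPolynomial.X 0 * c') d = jj K a + jj K (b + MvPolynomial.X 1 * c') * ex1 K
        - jj K c' * (ex1 K * ey2 K - ey1 K * ex2 K) + jj K d * (ex1 K * ey1 K) := by
      rw [e2, f2, ← jj_comm, ← jj_comm, form]
      simp only [map_add, map_mul, add_mul, mul_sub, ← mul_assoc]
      rw [jj_comm K c' (jj K (MvPolynomial.X 0)), jj_comm K c' (jj K (MvPolynomial.X 1))]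
      abel
    rw [key]
    have g1 : ex1 K ∈ Algebra.adjoin K G := Algebra.subset_adjoin (by rw [hG]; simp)
    have g2 : ex1 K * ey1 K ∈ Algebra.adjoin K G := Algebra.subset_adjoin (by rw [hG]; simp)
    have g3 : ex1 K * ey2 K - ey1 K * ex2 K ∈ Algebra.adjoin K G :=
      Algebra.subset_adjoin (by rw [hG]; simp)
    exact add_mem (sub_mem (add_mem (hS _ ha) (mul_mem (hS _ hbb) g1)) (mul_mem (hS _ hc') g3))
      (mul_mem (hS _ hd) g2)
  · have hle : Algebra.adjoin K G ≤ AlgHom.equalizer σ (AlgHom.id K _) := by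
      rw [Algebra.adjoin_le_iff]
      intro z hz
      change σ z = z
      rw [hG] at hz
      rcases hz with rfl | rfl | rfl | rfl | rfl
      · exact hx1
      · exact hx2
      · rw [map_mul, hx1, hy1, mul_add, xx, zero_add]
      · rw [map_sub, map_mul, map_mul, hx1, hy1, hx2, hy2, mul_add, add_mul]
        abel
      · rw [← jj_nn, hj, sg_nn K p hchar]
    intro z hz
    exact hle hz
end
end

section
/- Let p be an odd prime, n ≥ 2, q = p^n, and let K be a field of characteristic p. In the group algebra A = K[M] of M = ZMod q × ZMod q (written multiplicatively, with a = (1,0) and b = (0,1)), the following identities hold: ρ·(b − 1) = b·N(ab) − N(a); ρ·(a − 1) = N(b) − N(ab); ρ·(ab − 1) = N(b) − N(a); and κ·(a − 1) = −N(a). -/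
noncomputable section

open MonoidAlgebra Finset

/-- The group `M = ZMod q × ZMod q`, written multiplicatively. -/
abbrev Mgrp (q : ℕ) : Type := Multiplicative (ZMod q × ZMod q)

/-- The group algebra `K[M]`. -/
abbrev GrpAlg (K : Type) [Field K] (q : ℕ) : Type := MonoidAlgebra K (Mgrp q)

variable (K : Type) [Field K] (q : ℕ)

/-- The generator `a = (1,0)` of `M`, as an element of `K[M]`. -/
def aEl : GrpAlg K q := MonoidAlgebra.of K (Mgrp q) (Multiplicative.ofAdd (1, 0))

/-- The generator `b = (0,1)` of `M`, as an element of `K[M]`. -/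
def bEl : GrpAlg K q := MonoidAlgebra.of K (Mgrp q) (Multiplicative.ofAdd (0, 1))

/-- `N(x) = ∑_{i=0}^{q−1} x^i`. -/
def Nel (x : GrpAlg K q) : GrpAlg K q := ∑ i ∈ range q, x ^ i

/-- `ρ = ∑_{0 ≤ j ≤ i ≤ q−1} a^i b^j`. -/
def ρEl : GrpAlg K q :=
  ∑ ij ∈ (range q ×ˢ range q).filter (fun ij => ij.2 ≤ ij.1), aEl K q ^ ij.1 * bEl K q ^ ij.2

/-- `κ = ∑_{i=0}^{q−1} (i+1)·a^i`, with coefficients `(i+1)` taken in `K`. -/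
def κEl : GrpAlg K q := ∑ i ∈ range q, ((i : K) + 1) • aEl K q ^ i

theorem aux_rho (R : Type) [CommRing R] (a b : R) (m : ℕ) :
    ∑ ij ∈ (range m ×ˢ range m).filter (fun ij => ij.2 ≤ ij.1), a ^ ij.1 * b ^ ij.2
      = ∑ i ∈ range m, a ^ i * ∑ j ∈ range (i + 1), b ^ j := by
  rw [Finset.sum_filter, Finset.sum_product]
  refine Finset.sum_congr rfl fun i hi => ?_
  rw [← Finset.sum_filter, Finset.mul_sum]
  refine Finset.sum_congr ?_ fun _ _ => rfl
  ext j
  simp only [Finset.mem_filter, Finset.mem_range] at hi ⊢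
  omega

theorem aux_b (R : Type) [CommRing R] (a b : R) (m : ℕ) :
    (∑ i ∈ range m, a ^ i * ∑ j ∈ range (i + 1), b ^ j) * (b - 1)
      = b * ∑ i ∈ range m, (a * b) ^ i - ∑ i ∈ range m, a ^ i := by
  rw [Finset.sum_mul, Finset.mul_sum, ← Finset.sum_sub_distrib]
  refine Finset.sum_congr rfl fun i _ => ?_
  rw [mul_assoc, geom_sum_mul]
  ring

theorem aux_a (R : Type) [CommRing R] (a b : R) (m : ℕ) :
    (∑ i ∈ range m, a ^ i * ∑ j ∈ range (i + 1), b ^ j) * (a - 1)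
      = a ^ m * ∑ i ∈ range m, b ^ i - ∑ i ∈ range m, (a * b) ^ i := by
  induction m with
  | zero => simp
  | succ m ih =>
    rw [Finset.sum_range_succ, add_mul, ih, Finset.sum_range_succ (fun i => (a * b) ^ i),
      Finset.sum_range_succ (fun i => b ^ i)]
    ring

theorem aux_k (F R : Type) [Field F] [CommRing R] [Algebra F R] (a : R) (m : ℕ) :
    (∑ i ∈ range m, ((i : F) + 1) • a ^ i) * (a - 1)
      = (m : F) • a ^ m - ∑ i ∈ range m, a ^ i := by
  induction m with
  | zero => simp
  | succ m ih =>
    rw [Finset.sum_range_succ, add_mul, ih, Finset.sum_range_succ (fun i => a ^ i)]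
    simp only [Algebra.smul_def, Nat.cast_succ, map_add, map_one]
    ring

theorem aux_apow : aEl K q ^ q = 1 := by
  rw [aEl, ← map_pow, ← ofAdd_nsmul]
  simp [MonoidAlgebra.one_def]
  rfl

theorem aux_bpow : bEl K q ^ q = 1 := by
  rw [bEl, ← map_pow, ← ofAdd_nsmul]
  simp [MonoidAlgebra.one_def]
  rfl

/-- for an odd prime `p`, `n ≥ 2`, `q = p^n` and `K` of characteristic `p`,
the identities `ρ(b−1) = b·N(ab) − N(a)`, `ρ(a−1) = N(b) − N(ab)`, `ρ(ab−1) = N(b) − N(a)`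
and `κ(a−1) = −N(a)` hold in `K[M]`. -/
theorem stmt11 (p n : ℕ) (hp : p.Prime) (hodd : Odd p) (hn : 2 ≤ n)
    (hchar : CharP K p) (hq : q = p ^ n) :
    ρEl K q * (bEl K q - 1) = bEl K q * Nel K q (aEl K q * bEl K q) - Nel K q (aEl K q) ∧
    ρEl K q * (aEl K q - 1) = Nel K q (bEl K q) - Nel K q (aEl K q * bEl K q) ∧
    ρEl K q * (aEl K q * bEl K q - 1) = Nel K q (bEl K q) - Nel K q (aEl K q) ∧
    κEl K q * (aEl K q - 1) = -Nel K q (aEl K q) := by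
  have h1 : ρEl K q * (bEl K q - 1)
      = bEl K q * Nel K q (aEl K q * bEl K q) - Nel K q (aEl K q) := by
    rw [ρEl, aux_rho, aux_b]; rfl
  have h2 : ρEl K q * (aEl K q - 1)
      = Nel K q (bEl K q) - Nel K q (aEl K q * bEl K q) := by
    rw [ρEl, aux_rho, aux_a, aux_apow, one_mul]; rfl
  have h3 : Nel K q (bEl K q) * (bEl K q - 1) = 0 := by
    rw [Nel, geom_sum_mul, aux_bpow, sub_self]
  refine ⟨h1, h2, ?_, ?_⟩
  · linear_combination h1 + bEl K q * h2 + h3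
  · have hq0 : (q : K) = 0 := by
      rw [hq, Nat.cast_pow, CharP.cast_eq_zero, zero_pow (by omega)]
    rw [κEl, aux_k, hq0, zero_smul, zero_sub]; rfl
end
end

section
/- Let p be an odd prime, n ≥ 2, q = p^n, and let K be a field of characteristic p. Let σ be the K-algebra automorphism of the group algebra A = K[M] of M = ZMod q × ZMod q induced by the group automorphism of M sending a ↦ ab and b ↦ b (i.e. (i,j) ↦ (i, i + j)). Then ∑_{r=0}^{q−1} σ^r(ρ) · b^r = κ · N(b) in A. -/
noncomputable section

open MonoidAlgebra Finset

variable (K : Type) [Field K] (q : ℕ)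

theorem aux_sum {R : Type*} [AddCommMonoid R] (f : ℕ → R) (m t : ℕ) :
    ∑ r ∈ range t, ∑ j ∈ range m, f (r * m + j) = ∑ k ∈ range (t * m), f k := by
  induction t with
  | zero => simp
  | succ t ih => rw [sum_range_succ, ih, Nat.succ_mul, Finset.sum_range_add]

theorem aux_pow {R : Type*} [CommRing R] (b : R) (q : ℕ) (hb : b ^ q = 1) (m : ℕ) :
    ∑ r ∈ range q, ∑ j ∈ range m, b ^ (r * m + j) = (m : R) * ∑ k ∈ range q, b ^ k := by
  rw [aux_sum (fun k => b ^ k), Nat.mul_comm, ← aux_sum]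
  simp [pow_add, pow_mul', hb]

/-- let `σ` be the `K`-algebra automorphism of `K[M]` induced by the group
automorphism `(i,j) ↦ (i, i+j)` of `M` (i.e. `a ↦ ab`, `b ↦ b`).  Then
`∑_{r=0}^{q−1} σ^r(ρ)·b^r = κ·N(b)`. -/
theorem stmt12 (p n : ℕ) (hp : p.Prime) (hodd : Odd p) (hn : 2 ≤ n)
    (hchar : CharP K p) (hq : q = p ^ n)
    (σ : GrpAlg K q ≃ₐ[K] GrpAlg K q)
    (hσ : ∀ i j : ZMod q,
      σ (MonoidAlgebra.of K (Mgrp q) (Multiplicative.ofAdd (i, j))) =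
        MonoidAlgebra.of K (Mgrp q) (Multiplicative.ofAdd (i, i + j))) :
    ∑ r ∈ range q, (σ ^ r) (ρEl K q) * bEl K q ^ r = κEl K q * Nel K q (bEl K q) := by
  have hbq : bEl K q ^ q = 1 := by
    rw [bEl, ← map_pow, ← ofAdd_nsmul]
    simp [MonoidAlgebra.one_def]
    rfl
  have hσa : σ (aEl K q) = aEl K q * bEl K q := by
    rw [aEl, bEl, hσ, ← map_mul, ← ofAdd_add]
    simp
  have hσb : σ (bEl K q) = bEl K q := by
    rw [bEl, hσ]
    simp
  have hrb : ∀ r : ℕ, (σ ^ r) (bEl K q) = bEl K q := by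
    intro r
    induction r with
    | zero => simp
    | succ r ih => rw [pow_succ, AlgEquiv.mul_apply, hσb, ih]
  have hra : ∀ r : ℕ, (σ ^ r) (aEl K q) = aEl K q * bEl K q ^ r := by
    intro r
    induction r with
    | zero => simp
    | succ r ih =>
      rw [pow_succ, AlgEquiv.mul_apply, hσa, map_mul, ih, hrb, pow_succ, mul_assoc]
  have hρ : ρEl K q = ∑ i ∈ range q, ∑ j ∈ range (i + 1), aEl K q ^ i * bEl K q ^ j := by
    rw [ρEl, sum_filter, sum_product]
    refine sum_congr rfl fun i hi => ?_
    rw [← sum_filter]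
    refine sum_congr ?_ fun _ _ => rfl
    ext j
    simp only [mem_filter, mem_range] at *
    omega
  rw [hρ, κEl, Nel, sum_mul]
  simp only [map_sum, map_mul, map_pow, hra, hrb, sum_mul]
  rw [sum_comm]
  refine sum_congr rfl fun i _ => ?_
  have key := aux_pow (bEl K q) q hbq (i + 1)
  have hs : ((i : K) + 1) • aEl K q ^ i = ((i + 1 : ℕ) : GrpAlg K q) * aEl K q ^ i := by
    rw [← nsmul_eq_mul, ← Nat.cast_smul_eq_nsmul K]
    push_cast
    rfl
  rw [hs, mul_right_comm, ← key, sum_mul]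
  refine sum_congr rfl fun r _ => ?_
  rw [sum_mul]
  refine sum_congr rfl fun j _ => ?_
  ring
end
end
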